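/- Let S be a nonempty finite set, ν a probability distribution on S, and X_1,…,X_n i.i.d. samples from ν (n ≥ 1). Define the missing mass M := Σ_{x∈S} ν(x)·1{ x ∉ {X_1,…,X_n} }. Then E[M] = Σ_{x∈S} ν(x)·(1 − ν(x))^n ≤ 4|S|/(9n). -/

import Mathlib

open Finset

/-- `ν` is a probability distribution on the finite set `S`. -/
def IsDist {S : Type} [Fintype S] (ν : S → ℝ) : Prop :=
  (∀ x, 0 ≤ ν x) ∧ ∑ x, ν x = 1

/-- Probability of the sample sequence `X` under `n` i.i.d. samples from `ν`. -/
noncomputable def wt1 {S : Type} {n : ℕ} (ν : S → ℝ) (X : Fin n → S) : ℝ :=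
  ∏ i, ν (X i)

open scoped Classical

/-- The missing mass `M = Σ_x ν(x)·1{x ∉ {X_1,…,X_n}}` of a sample `X`. -/
noncomputable def missingMass {S : Type} [Fintype S] {n : ℕ} (ν : S → ℝ)
    (X : Fin n → S) : ℝ :=
  ∑ x, if ∀ i, X i ≠ x then ν x else 0

/-!
By linearity of expectation, `E[M] = ∑ x, ν x * ℙ(x is never sampled)`, and by independence a point
`x` is never sampled with probability `(1 - ν x) ^ n`. Since `1 + t ≤ exp t` yields both
`n * x ≤ exp (n * x - 1)` and `(1 - x) ^ n ≤ exp (-x) ^ n`, each summand is at most `exp (-1) / n`,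
and `exp (-1) < 4 / 9`.
-/

theorem natCast_mul_mul_one_sub_pow_le_exp_neg_one (n : ℕ) {x : ℝ} (hx : x ≤ 1) :
    n * (x * (1 - x) ^ n) ≤ Real.exp (-1) := by
  have h_linear : n * x ≤ Real.exp (n * x - 1) := by
    simpa using Real.add_one_le_exp (n * x - 1)
  have h_pow : (1 - x) ^ n ≤ Real.exp (-x) ^ n :=
    pow_le_pow_left₀ (sub_nonneg.2 hx) (Real.one_sub_le_exp_neg x) n
  calc n * (x * (1 - x) ^ n) = n * x * (1 - x) ^ n := (mul_assoc _ _ _).symm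
    _ ≤ Real.exp (n * x - 1) * Real.exp (-x) ^ n :=
      mul_le_mul h_linear h_pow (pow_nonneg (sub_nonneg.2 hx) n) (Real.exp_pos _).le
    _ = Real.exp (-1) := by
      rw [← Real.exp_nat_mul, ← Real.exp_add]
      ring_nf

section Sampling

variable {S : Type} [Fintype S] (ν : S → ℝ)

theorem sum_wt1_filter_forall (n : ℕ) (p : S → Prop) [DecidablePred p] :
    ∑ X : Fin n → S with ∀ i, p (X i), wt1 ν X = (∑ x with p x, ν x) ^ n := by
  rw [sum_pow']
  refine sum_congr ?_ fun _ _ => rfl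
  ext X
  simp only [mem_filter_univ, Fintype.mem_piFinset]

theorem sum_wt1_filter_forall_ne (n : ℕ) (x : S) :
    ∑ X : Fin n → S with ∀ i, X i ≠ x, wt1 ν X = (∑ y, ν y - ν x) ^ n := by
  rw [sum_wt1_filter_forall ν n (· ≠ x), filter_ne', sum_erase_eq_sub (mem_univ x)]

theorem sum_wt1_mul_missingMass_eq_sum_mul_sum_filter (n : ℕ) :
    ∑ X : Fin n → S, wt1 ν X * missingMass ν X =
      ∑ x, ν x * ∑ X : Fin n → S with ∀ i, X i ≠ x, wt1 ν X := by
  simp only [missingMass, mul_sum]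
  rw [sum_comm]
  simp only [sum_filter, mul_ite, mul_zero, mul_comm]

variable {ν}

theorem sum_wt1_mul_missingMass (hν : ∑ x, ν x = 1) (n : ℕ) :
    ∑ X : Fin n → S, wt1 ν X * missingMass ν X = ∑ x, ν x * (1 - ν x) ^ n := by
  simp only [sum_wt1_mul_missingMass_eq_sum_mul_sum_filter, sum_wt1_filter_forall_ne, hν]

theorem IsDist.le_one (hν : IsDist ν) (x : S) : ν x ≤ 1 :=
  (mem_Icc_of_mem_stdSimplex hν x).2

theorem IsDist.natCast_mul_sum_wt1_mul_missingMass_le (hν : IsDist ν) (n : ℕ) :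
    n * ∑ X : Fin n → S, wt1 ν X * missingMass ν X ≤ Fintype.card S * Real.exp (-1) := by
  rw [sum_wt1_mul_missingMass hν.2, mul_sum, ← nsmul_eq_mul, ← card_univ]
  exact sum_le_card_nsmul _ _ _ fun x _ =>
    natCast_mul_mul_one_sub_pow_le_exp_neg_one n (hν.le_one x)

end Sampling

/-- the expected missing mass of `n` i.i.d. samples equals
`Σ_x ν(x)(1 − ν(x))^n` and is at most `4|S|/(9n)`. -/
theorem stmt_18 (S : Type) [Fintype S] [Nonempty S]
    (ν : S → ℝ) (hν : IsDist ν) (n : ℕ) (hn : 1 ≤ n) :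
    (∑ X : Fin n → S, wt1 ν X * missingMass ν X) =
        ∑ x, ν x * (1 - ν x) ^ n ∧
      (∑ X : Fin n → S, wt1 ν X * missingMass ν X) ≤
        4 * (Fintype.card S : ℝ) / (9 * n) := by
  refine ⟨sum_wt1_mul_missingMass hν.2 n, ?_⟩
  have hn_pos : (0 : ℝ) < n := by exact_mod_cast hn
  have h_exp : Real.exp (-1) ≤ 4 / 9 := by linarith [Real.exp_neg_one_lt_d9]
  have h_card : Fintype.card S * Real.exp (-1) ≤ Fintype.card S * (4 / 9) := by gcongr
  rw [le_div_iff₀ (mul_pos (by norm_num) hn_pos)]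
  linarith [hν.natCast_mul_sum_wt1_mul_missingMass_le n]
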